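/- Let (K_{i(e)}, w_e, p_e)_{e∈E} be a contractive Markov system with average contracting rate 0 < a < 1 satisfying the standing assumptions, with invariant Borel probability measure μ, generalized Markov measure M on Σ = E^ℤ, left shift S, and coding map F. If ∑_{i=1}^N ∫_{K_i} d(x, x_i) dμ(x) < ∞ for some points x_i ∈ K_i (i = 1,…,N), then the Kolmogorov–Sinai entropy of S with respect to M equals h_M(S) = −∑_{e∈E} ∫_{K_{i(e)}} p_e log p_e d(F_*M), where F_*M is the pushforward of M under F (with the convention 0 log 0 = 0). -/

import Mathlib

open MeasureTheory Filter ENNReal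

/-- The modulus of uniform continuity of a real-valued function on a
(pseudo)metric space, valued in `ℝ≥0∞`. -/
noncomputable def modulus {X : Type*} [PseudoMetricSpace X] (h : X → ℝ) (t : ℝ) : ℝ≥0∞ :=
  ⨆ (x : X) (y : X) (_ : dist x y ≤ t), ENNReal.ofReal |h x - h y|

/-- A function is Dini-continuous if `∫_0^c φ(t)/t dt < ∞` for some `c > 0`,
where `φ` is its modulus of uniform continuity. -/
def DiniContinuous {X : Type*} [PseudoMetricSpace X] (h : X → ℝ) : Prop :=
  ∃ c > (0 : ℝ), ∫⁻ t in Set.Ioc (0 : ℝ) c, modulus h t / ENNReal.ofReal t < ⊤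

/-- A Markov system on a metric space `K`, with vertex set `Fin N` and edge set `E`. -/
structure MarkovSystem (K : Type*) [MetricSpace K] [MeasurableSpace K]
    (N : ℕ) (E : Type*) [Fintype E] where
  /-- initial vertex of an edge -/
  edgeI : E → Fin N
  /-- terminal vertex of an edge -/
  edgeT : E → Fin N
  /-- the partition `K_1, …, K_N` of `K` -/
  Ki : Fin N → Set K
  Ki_nonempty : ∀ v, (Ki v).Nonempty
  Ki_measurable : ∀ v, MeasurableSet (Ki v)
  Ki_disjoint : ∀ v v', v ≠ v' → Disjoint (Ki v) (Ki v')
  Ki_cover : ∀ x : K, ∃ v, x ∈ Ki v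
  /-- the maps `w_e` -/
  w : E → K → K
  w_measurable : ∀ e, Measurable (w e)
  w_mapsTo : ∀ e, Set.MapsTo (w e) (Ki (edgeI e)) (Ki (edgeT e))
  /-- the probability functions `p_e` -/
  p : E → K → ℝ
  p_measurable : ∀ e, Measurable (p e)
  p_nonneg : ∀ e x, 0 ≤ p e x
  p_sum_one : ∀ x : K, ∑ e, p e x = 1
  p_eq_zero : ∀ e, ∀ x : K, x ∉ Ki (edgeI e) → p e x = 0

namespace MarkovSystem

variable {K : Type*} [MetricSpace K] [MeasurableSpace K] {N : ℕ} {E : Type*} [Fintype E]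

/-- Condition of contractiveness on average with rate `a`. -/
def ContractiveOnAvg (sys : MarkovSystem K N E) (a : ℝ) : Prop :=
  ∀ v : Fin N, ∀ x ∈ sys.Ki v, ∀ y ∈ sys.Ki v,
    ∑ e, sys.p e x * dist (sys.w e x) (sys.w e y) ≤ a * dist x y

/-- `μ` is an invariant Borel probability measure of the Markov system:
`∫ Uf dμ = ∫ f dμ` for every bounded Borel measurable `f`. -/
def IsInvariant (sys : MarkovSystem K N E) (μ : Measure K) : Prop :=
  IsProbabilityMeasure μ ∧
  ∀ f : K → ℝ, Measurable f → (∃ B, ∀ x, |f x| ≤ B) →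
    ∫ x, (∑ e, sys.p e x * f (sys.w e x)) ∂μ = ∫ x, f x ∂μ

end MarkovSystem

/-- `wordProb w p (e₁ :: … :: eₖ) x = p_{e₁}(x) p_{e₂}(w_{e₁}x) ⋯ p_{eₖ}(w_{e_{k-1}} ∘ ⋯ ∘ w_{e₁}x)`. -/
def wordProb {K E : Type*} (w : E → K → K) (p : E → K → ℝ) : List E → K → ℝ
  | [], _ => 1
  | e :: l, x => p e x * wordProb w p l (w e x)

/-- `wordMap w (e₁ :: … :: eₖ) = w_{eₖ} ∘ ⋯ ∘ w_{e₁}`. -/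
def wordMap {K E : Type*} (w : E → K → K) : List E → K → K
  | [], x => x
  | e :: l, x => wordMap w l (w e x)

/-- `M` is the generalized Markov measure on `Σ = E^ℤ` associated with the Markov
system and the invariant measure `μ`. -/
def IsMarkovMeasure {K : Type*} [MetricSpace K] [MeasurableSpace K] {N : ℕ}
    {E : Type*} [Fintype E] [MeasurableSpace E]
    (sys : MarkovSystem K N E) (μ : Measure K) (M : Measure (ℤ → E)) : Prop :=
  IsProbabilityMeasure M ∧
  ∀ (m : ℤ) (es : List E),
    M {σ : ℤ → E | ∀ j : Fin es.length, σ (m + (j : ℕ)) = es.get j}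
      = ENNReal.ofReal (∫ x, wordProb sys.w sys.p es x ∂μ)

/-- The left shift on `E^ℤ`. -/
def shift {E : Type*} (σ : ℤ → E) : ℤ → E := fun k => σ (k + 1)

/-- `comps w σ m = w_{σ₀} ∘ w_{σ₋₁} ∘ ⋯ ∘ w_{σ₋ₘ}`. -/
def comps {K E : Type*} (w : E → K → K) (σ : ℤ → E) : ℕ → K → K
  | 0 => w (σ 0)
  | n + 1 => fun x => comps w σ n (w (σ (-((n : ℤ) + 1))) x)

/-- `F` is the coding map of the contractive Markov system:
`F(σ) = lim_{m → -∞} w_{σ₀} ∘ ⋯ ∘ w_{σₘ} x_{i(σₘ)}` for `M`-a.e. `σ`. -/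
def IsCodingMap {K : Type*} [MetricSpace K] [MeasurableSpace K] {N : ℕ}
    {E : Type*} [Fintype E] [MeasurableSpace E]
    (sys : MarkovSystem K N E) (M : Measure (ℤ → E)) (F : (ℤ → E) → K) : Prop :=
  Measurable F ∧ ∃ xs : Fin N → K, (∀ v, xs v ∈ sys.Ki v) ∧
    ∀ᵐ σ ∂M, Filter.Tendsto
      (fun m : ℕ => comps sys.w σ m (xs (sys.edgeI (σ (-(m : ℤ))))))
      Filter.atTop (nhds (F σ))

/-- Entropy of the finite measurable partition given by the fibers of `π`. -/
noncomputable def partEntropy {Ω : Type*} [MeasurableSpace Ω] (M : Measure Ω)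
    {F : Type*} [Fintype F] (π : Ω → F) : ℝ :=
  -∑ f : F, ((M (π ⁻¹' {f})).toReal * Real.log (M (π ⁻¹' {f})).toReal)

/-- The Kolmogorov–Sinai entropy of a measure-preserving transformation `S`
with respect to `M`: the supremum over all finite measurable partitions `π` of
`inf_n (1/n) H(⋁_{i=0}^{n-1} S^{-i} π)`. -/
noncomputable def ksEntropy {Ω : Type*} [MeasurableSpace Ω] (M : Measure Ω) (S : Ω → Ω) : ℝ≥0∞ :=
  ⨆ (k : ℕ) (π : Ω → Fin k) (_ : ∀ j, MeasurableSet (π ⁻¹' {j})),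
    ⨅ n : ℕ, ENNReal.ofReal (((n : ℝ) + 1)⁻¹ *
      partEntropy M (fun ω => fun j : Fin (n + 1) => π (S^[(j : ℕ)] ω)))

namespace MarkovSystem

variable {K : Type*} [MetricSpace K] [MeasurableSpace K] {N : ℕ} {E : Type*} [Fintype E]
  (sys : MarkovSystem K N E)

/-- The probability of the word `u` when starting from `x`. -/
def cylProb {n : ℕ} (u : Fin n → E) (x : K) : ℝ := wordProb sys.w sys.p (List.ofFn u) x

/-- The composition of the maps along the word `u`. -/
def cylMap {n : ℕ} (u : Fin n → E) (x : K) : K := wordMap sys.w (List.ofFn u) x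

/-- The action of the Markov operator on functions. -/
def transfer (f : K → ℝ) (x : K) : ℝ := ∑ e, sys.p e x * f (sys.w e x)

/-- The entropy of the probability vector `(p_e(x))_e`. -/
noncomputable def localEntropy (x : K) : ℝ := ∑ e, Real.negMulLog (sys.p e x)

/-- On each `K_v`, the oscillation of `g` is bounded by `ε + C * dist`, for every `ε > 0`. -/
def AlmostLipschitz (g : K → ℝ) : Prop :=
  ∀ ε > 0, ∃ C : ℝ, 0 ≤ C ∧ ∀ v, ∀ x ∈ sys.Ki v, ∀ y ∈ sys.Ki v,
    |g x - g y| ≤ ε + C * dist x y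

theorem _root_.Fintype.sum_fin_succ_fun {M : Type*} [AddCommMonoid M] {n : ℕ}
    (f : (Fin (n + 1) → E) → M) :
    ∑ u, f u = ∑ e, ∑ u : Fin n → E, f (Fin.cons e u) := by
  rw [← (Fin.consEquiv fun _ => E).sum_comp, Fintype.sum_prod_type]
  rfl

variable {sys}

@[simp] theorem cylProb_zero (u : Fin 0 → E) (x : K) : sys.cylProb u x = 1 := by
  simp [cylProb, wordProb]

@[simp] theorem cylProb_cons {n : ℕ} (e : E) (u : Fin n → E) (x : K) :
    sys.cylProb (Fin.cons e u : Fin (n + 1) → E) x = sys.p e x * sys.cylProb u (sys.w e x) := by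
  simp [cylProb, List.ofFn_succ, wordProb]

@[simp] theorem cylMap_zero (u : Fin 0 → E) (x : K) : sys.cylMap u x = x := by
  simp [cylMap, wordMap]

@[simp] theorem cylMap_cons {n : ℕ} (e : E) (u : Fin n → E) (x : K) :
    sys.cylMap (Fin.cons e u : Fin (n + 1) → E) x = sys.cylMap u (sys.w e x) := by
  simp [cylMap, List.ofFn_succ, wordMap]

theorem p_le_one (e : E) (x : K) : sys.p e x ≤ 1 := by
  rw [← sys.p_sum_one x]
  exact Finset.single_le_sum (fun e _ => sys.p_nonneg e x) (Finset.mem_univ e)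

theorem cylProb_nonneg {n : ℕ} (u : Fin n → E) (x : K) : 0 ≤ sys.cylProb u x := by
  induction n generalizing x with
  | zero => simp
  | succ n ih =>
    rw [← Fin.cons_self_tail u, cylProb_cons]
    exact mul_nonneg (sys.p_nonneg _ _) (ih _ _)

theorem cylProb_le_one {n : ℕ} (u : Fin n → E) (x : K) : sys.cylProb u x ≤ 1 := by
  induction n generalizing x with
  | zero => simp
  | succ n ih =>
    rw [← Fin.cons_self_tail u, cylProb_cons]
    exact mul_le_one₀ (p_le_one _ _) (cylProb_nonneg _ _) (ih _ _)

theorem sum_cylProb (n : ℕ) (x : K) : ∑ u : Fin n → E, sys.cylProb u x = 1 := by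
  induction n generalizing x with
  | zero => simp
  | succ n ih => simp [Fintype.sum_fin_succ_fun, ← Finset.mul_sum, ih, sys.p_sum_one]

@[fun_prop] theorem measurable_cylProb {n : ℕ} (u : Fin n → E) : Measurable (sys.cylProb u) := by
  induction n with
  | zero => simp [funext (cylProb_zero u)]
  | succ n ih =>
    rw [← Fin.cons_self_tail u, funext (cylProb_cons _ _)]
    exact (sys.p_measurable _).mul ((ih _).comp (sys.w_measurable _))

@[fun_prop] theorem measurable_cylMap {n : ℕ} (u : Fin n → E) : Measurable (sys.cylMap u) := by
  induction n with
  | zero => exact (funext (cylMap_zero u) : sys.cylMap u = id) ▸ measurable_id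
  | succ n ih =>
    rw [← Fin.cons_self_tail u, funext (cylMap_cons _ _)]
    exact (ih _).comp (sys.w_measurable _)

theorem integrable_cylProb {n : ℕ} (u : Fin n → E) (μ : Measure K) [IsProbabilityMeasure μ] :
    Integrable (sys.cylProb u) μ :=
  .of_bound (measurable_cylProb u).aestronglyMeasurable 1
    (.of_forall fun x => by
      rw [Real.norm_of_nonneg (cylProb_nonneg u x)]; exact cylProb_le_one u x)

theorem edgeI_eq_of_p_pos {e : E} {x : K} {v : Fin N} (hx : x ∈ sys.Ki v) (h : 0 < sys.p e x) :
    sys.edgeI e = v := by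
  have hx' : x ∈ sys.Ki (sys.edgeI e) := by
    by_contra hn
    exact h.ne' (sys.p_eq_zero e x hn)
  by_contra hn
  exact (sys.Ki_disjoint _ _ hn).le_bot ⟨hx', hx⟩

theorem cylProb_pos_of_mem {δ : ℝ} (hδpos : 0 < δ)
    (hδ : ∀ e, ∀ x ∈ sys.Ki (sys.edgeI e), δ ≤ sys.p e x) {n : ℕ} {u : Fin n → E} {x y : K}
    {v : Fin N} (hx : x ∈ sys.Ki v) (hy : y ∈ sys.Ki v) (h : 0 < sys.cylProb u x) :
    0 < sys.cylProb u y := by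
  induction n generalizing x y v with
  | zero => simp
  | succ n ih =>
    rw [← Fin.cons_self_tail u, cylProb_cons] at h ⊢
    have hp := pos_of_mul_pos_left h (cylProb_nonneg _ _)
    obtain rfl := edgeI_eq_of_p_pos hx hp
    exact mul_pos (hδpos.trans_le (hδ _ _ hy))
      (ih (sys.w_mapsTo _ hx) (sys.w_mapsTo _ hy) (pos_of_mul_pos_right h hp.le))

theorem exists_cylMap_mem {n : ℕ} {u : Fin n → E} {x y : K}
    {v : Fin N} (hx : x ∈ sys.Ki v) (hy : y ∈ sys.Ki v) (h : 0 < sys.cylProb u x) :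
    ∃ v', sys.cylMap u x ∈ sys.Ki v' ∧ sys.cylMap u y ∈ sys.Ki v' := by
  induction n generalizing x y v with
  | zero => exact ⟨v, by simpa using hx, by simpa using hy⟩
  | succ n ih =>
    rw [← Fin.cons_self_tail u, cylProb_cons] at h
    have hp := pos_of_mul_pos_left h (cylProb_nonneg _ _)
    obtain rfl := edgeI_eq_of_p_pos hx hp
    rw [← Fin.cons_self_tail u, cylMap_cons, cylMap_cons]
    exact ih (sys.w_mapsTo _ hx) (sys.w_mapsTo _ hy) (pos_of_mul_pos_right h hp.le)

/-- Monotonicity of `∑ p_e(x) f_e`, which only involves the edges leaving the vertex of `x`. -/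
theorem sum_p_mul_le {x : K} {v : Fin N} (hx : x ∈ sys.Ki v) {f g : E → ℝ}
    (h : ∀ e, sys.edgeI e = v → f e ≤ g e) :
    ∑ e, sys.p e x * f e ≤ ∑ e, sys.p e x * g e := by
  refine Finset.sum_le_sum fun e _ => ?_
  rcases (sys.p_nonneg e x).eq_or_lt with h0 | h0
  · simp [← h0]
  · exact mul_le_mul_of_nonneg_left (h e (edgeI_eq_of_p_pos hx h0)) h0.le

theorem sum_cylProb_mul_dist_le {a : ℝ} (ha0 : 0 < a) (hcontr : sys.ContractiveOnAvg a) (n : ℕ)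
    {x y : K} {v : Fin N} (hx : x ∈ sys.Ki v) (hy : y ∈ sys.Ki v) :
    ∑ u : Fin n → E, sys.cylProb u x * dist (sys.cylMap u x) (sys.cylMap u y)
      ≤ a ^ n * dist x y := by
  induction n generalizing x y v with
  | zero => simp
  | succ n ih =>
    simp only [Fintype.sum_fin_succ_fun, cylProb_cons, cylMap_cons, mul_assoc, ← Finset.mul_sum]
    calc _ ≤ ∑ e, sys.p e x * (a ^ n * dist (sys.w e x) (sys.w e y)) := by
          refine sum_p_mul_le hx ?_
          rintro e rfl
          exact ih (sys.w_mapsTo _ hx) (sys.w_mapsTo _ hy)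
      _ = a ^ n * ∑ e, sys.p e x * dist (sys.w e x) (sys.w e y) := by
          rw [Finset.mul_sum]; exact Finset.sum_congr rfl fun _ _ => by ring
      _ ≤ a ^ n * (a * dist x y) := by gcongr; exact hcontr v x hx y hy
      _ = _ := by ring

theorem measurable_transfer {f : K → ℝ} (hf : Measurable f) : Measurable (sys.transfer f) :=
  Finset.measurable_sum _ fun e _ => (sys.p_measurable e).mul (hf.comp (sys.w_measurable e))

theorem integral_transfer {μ : Measure K} (hμ : sys.IsInvariant μ) {f : K → ℝ}
    (hf : Measurable f) {B : ℝ} (hB : ∀ x, |f x| ≤ B) :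
    ∫ x, sys.transfer f x ∂μ = ∫ x, f x ∂μ :=
  hμ.2 f hf ⟨B, hB⟩

theorem abs_sum_cylProb_mul_le {n : ℕ} {c : (Fin n → E) → ℝ} {B : ℝ} {x : K}
    (hB : ∀ u, 0 < sys.cylProb u x → |c u| ≤ B) : |∑ u, sys.cylProb u x * c u| ≤ B := by
  calc _ ≤ ∑ u, |sys.cylProb u x * c u| := Finset.abs_sum_le_sum_abs _ _
    _ ≤ ∑ u : Fin n → E, sys.cylProb u x * B := by
        refine Finset.sum_le_sum fun u _ => ?_
        rcases (cylProb_nonneg (sys := sys) u x).eq_or_lt with h0 | h0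
        · simp [← h0]
        · rw [abs_mul, abs_of_pos h0]
          exact mul_le_mul_of_nonneg_left (hB u h0) h0.le
    _ = B := by rw [← Finset.sum_mul, sum_cylProb, one_mul]

theorem integral_sum_cylProb_mul {μ : Measure K} (hμ : sys.IsInvariant μ) {g : K → ℝ}
    (hg : Measurable g) {B : ℝ} (hB : ∀ x, |g x| ≤ B) (n : ℕ) :
    ∫ x, ∑ u : Fin n → E, sys.cylProb u x * g (sys.cylMap u x) ∂μ = ∫ x, g x ∂μ := by
  induction n with
  | zero => simp
  | succ n ih =>
    rw [← ih, ← integral_transfer hμ (f := fun x => ∑ u : Fin n → E,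
      sys.cylProb u x * g (sys.cylMap u x)) (B := B)]
    · simp only [transfer, Fintype.sum_fin_succ_fun, cylProb_cons, cylMap_cons, mul_assoc,
        ← Finset.mul_sum]
    · fun_prop
    · exact fun x => abs_sum_cylProb_mul_le fun u _ => hB _

theorem abs_negMulLog_le_one {t : ℝ} (h0 : 0 ≤ t) (h1 : t ≤ 1) : |Real.negMulLog t| ≤ 1 := by
  rw [abs_of_nonneg (Real.negMulLog_nonneg h0 h1)]
  have := Real.negMulLog_le_one_sub_self h0
  linarith

theorem abs_localEntropy_le (x : K) : |sys.localEntropy x| ≤ Fintype.card E := by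
  refine (Finset.abs_sum_le_sum_abs _ _).trans ?_
  simpa using Finset.sum_le_sum (s := Finset.univ) fun e _ =>
    abs_negMulLog_le_one (sys.p_nonneg e x) (p_le_one e x)

theorem measurable_localEntropy : Measurable sys.localEntropy :=
  Finset.measurable_sum _ fun e _ => Real.continuous_negMulLog.measurable.comp (sys.p_measurable e)

theorem sum_negMulLog_cylProb_succ (n : ℕ) (x : K) :
    ∑ u : Fin (n + 1) → E, Real.negMulLog (sys.cylProb u x) =
      sys.localEntropy x +
        sys.transfer (fun y => ∑ u : Fin n → E, Real.negMulLog (sys.cylProb u y)) x := by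
  simp only [Fintype.sum_fin_succ_fun, cylProb_cons, Real.negMulLog_mul, Finset.sum_add_distrib,
    ← Finset.mul_sum, ← Finset.sum_mul, sum_cylProb, localEntropy, transfer, one_mul]

theorem measurable_negMulLog_cylProb {n : ℕ} (u : Fin n → E) :
    Measurable fun x => Real.negMulLog (sys.cylProb u x) :=
  Real.continuous_negMulLog.measurable.comp (measurable_cylProb u)

theorem integrable_negMulLog_cylProb {n : ℕ} (u : Fin n → E) (μ : Measure K)
    [IsProbabilityMeasure μ] : Integrable (fun x => Real.negMulLog (sys.cylProb u x)) μ :=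
  .of_bound (measurable_negMulLog_cylProb u).aestronglyMeasurable 1
    (.of_forall fun x => abs_negMulLog_le_one (cylProb_nonneg u x) (cylProb_le_one u x))

theorem integrable_localEntropy (μ : Measure K) [IsProbabilityMeasure μ] :
    Integrable sys.localEntropy μ :=
  .of_bound measurable_localEntropy.aestronglyMeasurable _ (.of_forall abs_localEntropy_le)

theorem integral_sum_negMulLog_cylProb {μ : Measure K} (hμ : sys.IsInvariant μ) (n : ℕ) :
    ∫ x, ∑ u : Fin n → E, Real.negMulLog (sys.cylProb u x) ∂μ = n * ∫ x, sys.localEntropy x ∂μ := by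
  have := hμ.1
  induction n with
  | zero => simp
  | succ n ih =>
    have hm : Measurable fun y => ∑ u : Fin n → E, Real.negMulLog (sys.cylProb u y) :=
      Finset.measurable_sum _ fun u _ => measurable_negMulLog_cylProb u
    have hb (y : K) : |∑ u : Fin n → E, Real.negMulLog (sys.cylProb u y)| ≤
        Fintype.card (Fin n → E) := by
      refine (Finset.abs_sum_le_sum_abs _ _).trans ?_
      simpa using Finset.sum_le_sum (s := Finset.univ) fun u _ =>
        abs_negMulLog_le_one (cylProb_nonneg (sys := sys) u y) (cylProb_le_one u y)
    simp only [sum_negMulLog_cylProb_succ]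
    rw [integral_add (integrable_localEntropy μ), integral_transfer hμ hm hb, ih]
    · push_cast; ring
    · refine .of_bound (measurable_transfer hm).aestronglyMeasurable
        (Fintype.card (Fin n → E)) (.of_forall fun x => ?_)
      have := abs_sum_cylProb_mul_le (sys := sys) (n := 1) (x := x)
        (c := fun u => ∑ u' : Fin n → E, Real.negMulLog (sys.cylProb u' (sys.w (u 0) x)))
        fun u _ => hb _
      simpa [Fintype.sum_fin_succ_fun, transfer] using this

end MarkovSystem

/-- A uniform form of continuity implied by Dini continuity. -/
theorem DiniContinuous.exists_dist_le_imp {X : Type*} [PseudoMetricSpace X] {h : X → ℝ}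
    (hh : DiniContinuous h) {ε : ℝ} (hε : 0 < ε) :
    ∃ t > 0, ∀ x y, dist x y ≤ t → |h x - h y| ≤ ε := by
  by_contra! hcon
  obtain ⟨c, hc, h_int⟩ := hh
  have hinv : ∫⁻ t in Set.Ioc (0 : ℝ) c, ENNReal.ofReal t⁻¹ = ⊤ := by
    by_contra hne
    have hI : IntegrableOn (fun t : ℝ => t⁻¹) (Set.Ioc 0 c) := by
      refine ⟨measurable_inv.aestronglyMeasurable, ?_⟩
      rw [hasFiniteIntegral_iff_ofReal]
      · exact lt_top_iff_ne_top.2 hne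
      · filter_upwards [ae_restrict_mem measurableSet_Ioc] with t ht
        exact inv_nonneg.2 ht.1.le
    rw [← intervalIntegrable_iff_integrableOn_Ioc_of_le hc.le, intervalIntegrable_inv_iff] at hI
    rcases hI with h0 | h0
    · exact hc.ne h0
    · exact h0 Set.left_mem_uIcc
  refine h_int.ne (top_le_iff.1 ?_)
  calc (⊤ : ℝ≥0∞) = ENNReal.ofReal ε * ∫⁻ t in Set.Ioc (0 : ℝ) c, ENNReal.ofReal t⁻¹ := by
        rw [hinv, ENNReal.mul_top (by simpa using hε)]
    _ = ∫⁻ t in Set.Ioc (0 : ℝ) c, ENNReal.ofReal ε * ENNReal.ofReal t⁻¹ :=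
        (lintegral_const_mul' _ _ ENNReal.ofReal_ne_top).symm
    _ ≤ _ := by
        refine setLIntegral_mono' measurableSet_Ioc fun t ht => ?_
        rw [ENNReal.ofReal_inv_of_pos ht.1, ← div_eq_mul_inv]
        gcongr
        obtain ⟨x, y, hxy, hlt⟩ := hcon t ht.1
        exact le_iSup_of_le x (le_iSup_of_le y (le_iSup_of_le hxy
          (ENNReal.ofReal_le_ofReal hlt.le)))

namespace MarkovSystem

variable {K : Type*} [MetricSpace K] [MeasurableSpace K] {N : ℕ} {E : Type*} [Fintype E]
  {sys : MarkovSystem K N E}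

theorem almostLipschitz_p (e : E)
    (hdini : DiniContinuous fun x : sys.Ki (sys.edgeI e) => sys.p e (x : K)) :
    sys.AlmostLipschitz (sys.p e) := by
  intro ε hε
  obtain ⟨t, ht, htc⟩ := hdini.exists_dist_le_imp hε
  refine ⟨t⁻¹, by positivity, fun v x hx y hy => ?_⟩
  by_cases hv : sys.edgeI e = v
  · subst hv
    rcases le_total (dist x y) t with hd | hd
    · have := htc ⟨x, hx⟩ ⟨y, hy⟩ hd
      have : 0 ≤ t⁻¹ * dist x y := by positivity
      linarith
    · have h1 : 1 ≤ t⁻¹ * dist x y := by rwa [inv_mul_eq_div, one_le_div ht]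
      have h2 : |sys.p e x - sys.p e y| ≤ 1 :=
        abs_sub_le_iff.2 ⟨by linarith [sys.p_nonneg e y, p_le_one (sys := sys) e x],
          by linarith [sys.p_nonneg e x, p_le_one (sys := sys) e y]⟩
      linarith
  · have h0 (z) (hz : z ∈ sys.Ki v) : sys.p e z = 0 :=
      sys.p_eq_zero e z fun hz' => (sys.Ki_disjoint _ _ hv).le_bot ⟨hz', hz⟩
    rw [h0 x hx, h0 y hy, sub_self, abs_zero]
    positivity

theorem _root_.abs_log_sub_log_le {δ s t : ℝ} (hδ : 0 < δ) (hs : δ ≤ s) (ht : δ ≤ t) :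
    |Real.log s - Real.log t| ≤ δ⁻¹ * |s - t| := by
  wlog h : t ≤ s generalizing s t
  · rw [abs_sub_comm, abs_sub_comm s]
    exact this ht hs (le_of_not_ge h)
  have ht0 := hδ.trans_le ht
  rw [abs_of_nonneg (sub_nonneg.2 (Real.log_le_log ht0 h)), abs_of_nonneg (sub_nonneg.2 h),
    ← Real.log_div (hδ.trans_le hs).ne' ht0.ne']
  calc _ ≤ s / t - 1 := Real.log_le_sub_one_of_pos (div_pos (hδ.trans_le hs) ht0)
    _ = t⁻¹ * (s - t) := by field_simp
    _ ≤ _ := by gcongr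

theorem AlmostLipschitz.sum {ι : Type*} (s : Finset ι) {g : ι → K → ℝ}
    (h : ∀ i ∈ s, sys.AlmostLipschitz (g i)) :
    sys.AlmostLipschitz fun x => ∑ i ∈ s, g i x := by
  classical
  induction s using Finset.induction_on with
  | empty => exact fun ε hε => ⟨0, le_rfl, fun v x _ y _ => by simpa using hε.le⟩
  | insert i s hi ih =>
    intro ε hε
    obtain ⟨C, hC, h1⟩ := h i (Finset.mem_insert_self i s) (ε / 2) (half_pos hε)
    obtain ⟨D, hD, h2⟩ := ih (fun j hj => h j (Finset.mem_insert_of_mem hj)) (ε / 2) (half_pos hε)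
    refine ⟨C + D, add_nonneg hC hD, fun v x hx y hy => ?_⟩
    simp only [Finset.sum_insert hi]
    calc _ = |(g i x - g i y) + (∑ j ∈ s, g j x - ∑ j ∈ s, g j y)| := by congr 1; ring
      _ ≤ _ := (abs_add_le _ _).trans (add_le_add (h1 v x hx y hy) (h2 v x hx y hy))
      _ = _ := by ring

theorem AlmostLipschitz.of_le_mul {f g : K → ℝ} (hf : sys.AlmostLipschitz f) {B : ℝ} (hB : 0 < B)
    (h : ∀ v, ∀ x ∈ sys.Ki v, ∀ y ∈ sys.Ki v, |g x - g y| ≤ B * |f x - f y|) :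
    sys.AlmostLipschitz g := by
  intro ε hε
  obtain ⟨C, hC, hf⟩ := hf (ε / B) (by positivity)
  refine ⟨B * C, by positivity, fun v x hx y hy => (h v x hx y hy).trans ?_⟩
  calc _ ≤ B * (ε / B + C * dist x y) := by gcongr; exact hf v x hx y hy
    _ = _ := by field_simp

theorem almostLipschitz_log_p {δ : ℝ} (hδpos : 0 < δ)
    (hδ : ∀ e, ∀ x ∈ sys.Ki (sys.edgeI e), δ ≤ sys.p e x)
    (hdini : ∀ e, DiniContinuous fun x : sys.Ki (sys.edgeI e) => sys.p e (x : K)) (e : E) :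
    sys.AlmostLipschitz fun x => Real.log (sys.p e x) := by
  refine (almostLipschitz_p e (hdini e)).of_le_mul (inv_pos.2 hδpos) fun v x hx y hy => ?_
  by_cases hv : sys.edgeI e = v
  · subst hv
    exact abs_log_sub_log_le hδpos (hδ e x hx) (hδ e y hy)
  · have h0 (z) (hz : z ∈ sys.Ki v) : sys.p e z = 0 :=
      sys.p_eq_zero e z fun hz' => (sys.Ki_disjoint _ _ hv).le_bot ⟨hz', hz⟩
    simp [h0 x hx, h0 y hy]

theorem almostLipschitz_localEntropy {δ : ℝ} (hδpos : 0 < δ)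
    (hδ : ∀ e, ∀ x ∈ sys.Ki (sys.edgeI e), δ ≤ sys.p e x)
    (hdini : ∀ e, DiniContinuous fun x : sys.Ki (sys.edgeI e) => sys.p e (x : K)) :
    sys.AlmostLipschitz sys.localEntropy := by
  refine AlmostLipschitz.sum _ fun e _ => ?_
  have hlog : |Real.log δ| + δ⁻¹ > 0 := by positivity
  refine (almostLipschitz_p e (hdini e)).of_le_mul hlog fun v x hx y hy => ?_
  by_cases hv : sys.edgeI e = v
  · subst hv
    have hx1 := hδ e x hx
    have hy1 := hδ e y hy
    have hx2 := p_le_one (sys := sys) e x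
    have hy2 := p_le_one (sys := sys) e y
    have h1 := abs_log_sub_log_le hδpos hx1 hy1
    have h2 : |Real.log (sys.p e x)| ≤ |Real.log δ| := by
      rw [abs_of_nonpos (Real.log_nonpos (sys.p_nonneg e x) hx2),
        abs_of_nonpos (Real.log_nonpos hδpos.le (hx1.trans hx2))]
      exact neg_le_neg (Real.log_le_log hδpos hx1)
    calc |Real.negMulLog (sys.p e x) - Real.negMulLog (sys.p e y)|
        = |Real.log (sys.p e x) * (sys.p e x - sys.p e y) +
            sys.p e y * (Real.log (sys.p e x) - Real.log (sys.p e y))| := by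
          rw [← abs_neg]; simp only [Real.negMulLog]; congr 1; ring
      _ ≤ |Real.log (sys.p e x)| * |sys.p e x - sys.p e y| +
            sys.p e y * |Real.log (sys.p e x) - Real.log (sys.p e y)| := by
          refine (abs_add_le _ _).trans (le_of_eq ?_)
          rw [abs_mul, abs_mul, abs_of_nonneg (sys.p_nonneg e y)]
      _ ≤ |Real.log δ| * |sys.p e x - sys.p e y| + 1 * (δ⁻¹ * |sys.p e x - sys.p e y|) := by
          gcongr
      _ = _ := by ring
  · have h0 (z) (hz : z ∈ sys.Ki v) : sys.p e z = 0 :=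
      sys.p_eq_zero e z fun hz' => (sys.Ki_disjoint _ _ hv).le_bot ⟨hz', hz⟩
    simp [h0 x hx, h0 y hy]

/-- An almost Lipschitz function is continuous if the partition is open. -/
theorem AlmostLipschitz.continuous {g : K → ℝ} (hg : sys.AlmostLipschitz g)
    (hopen : ∀ v, IsOpen (sys.Ki v)) : Continuous g := by
  refine continuous_iff_continuousAt.2 fun x => Metric.tendsto_nhds.2 fun ε hε => ?_
  obtain ⟨v, hv⟩ := sys.Ki_cover x
  obtain ⟨C, hC, h⟩ := hg (ε / 2) (half_pos hε)
  have hr : 0 < ε / (2 * (C + 1)) := by positivity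
  filter_upwards [(hopen v).mem_nhds hv, Metric.ball_mem_nhds x hr] with y hy hd
  rw [Metric.mem_ball, lt_div_iff₀ (by positivity)] at hd
  rw [Real.dist_eq]
  have := h v y hy x hv
  have := dist_nonneg (x := y) (y := x)
  nlinarith

/-- The cross entropy of `P_·(x)` relative to `P_·(y)` on words of length `n`. -/
noncomputable def crossEntropy (sys : MarkovSystem K N E) (n : ℕ) (x y : K) : ℝ :=
  ∑ u : Fin n → E, sys.cylProb u x * -Real.log (sys.cylProb u y)

theorem crossEntropy_succ {δ : ℝ} (hδpos : 0 < δ)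
    (hδ : ∀ e, ∀ x ∈ sys.Ki (sys.edgeI e), δ ≤ sys.p e x) (n : ℕ) {x y : K} {v : Fin N}
    (hx : x ∈ sys.Ki v) (hy : y ∈ sys.Ki v) :
    sys.crossEntropy (n + 1) x y = ∑ e, sys.p e x *
      (-Real.log (sys.p e y) + sys.crossEntropy n (sys.w e x) (sys.w e y)) := by
  simp only [crossEntropy, Fintype.sum_fin_succ_fun]
  refine Finset.sum_congr rfl fun e _ => ?_
  simp only [cylProb_cons, mul_assoc, ← Finset.mul_sum]
  rcases (sys.p_nonneg e x).eq_or_lt with h0 | h0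
  · simp [← h0]
  congr 1
  obtain rfl := edgeI_eq_of_p_pos hx h0
  rw [← one_mul (-Real.log (sys.p e y)), ← sum_cylProb (sys := sys) n (sys.w e x), Finset.sum_mul,
    ← Finset.sum_add_distrib]
  refine Finset.sum_congr rfl fun u _ => ?_
  rcases (cylProb_nonneg (sys := sys) u (sys.w e x)).eq_or_lt with h1 | h1
  · simp [← h1]
  · have h2 := cylProb_pos_of_mem hδpos hδ (sys.w_mapsTo e hx) (sys.w_mapsTo e hy) h1
    rw [Real.log_mul (hδpos.trans_le (hδ e y hy)).ne' h2.ne']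
    ring

theorem exists_crossEntropy_le {δ : ℝ} (hδpos : 0 < δ)
    (hδ : ∀ e, ∀ x ∈ sys.Ki (sys.edgeI e), δ ≤ sys.p e x)
    (hdini : ∀ e, DiniContinuous fun x : sys.Ki (sys.edgeI e) => sys.p e (x : K))
    {a : ℝ} (ha1 : a < 1) (hcontr : sys.ContractiveOnAvg a)
    {ε : ℝ} (hε : 0 < ε) :
    ∃ C : ℝ, ∀ n : ℕ, ∀ v, ∀ x ∈ sys.Ki v, ∀ y ∈ sys.Ki v,
      sys.crossEntropy n x y ≤
        ∑ u : Fin n → E, Real.negMulLog (sys.cylProb u x) + n * ε + C * dist x y := by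
  choose C hC hlog using fun e => almostLipschitz_log_p hδpos hδ hdini e ε hε
  set D : ℝ := ∑ e, C e with hD
  have hCD (e) : C e ≤ D := Finset.single_le_sum (fun e _ => hC e) (Finset.mem_univ e)
  have hD0 : 0 ≤ D := Finset.sum_nonneg fun e _ => hC e
  have ha : 0 < 1 - a := by linarith
  refine ⟨D / (1 - a), fun n => ?_⟩
  induction n with
  | zero =>
    intro v x _ y _
    simp only [crossEntropy, cylProb_zero]
    simp
    positivity
  | succ n ih =>
    intro v x hx y hy
    rw [crossEntropy_succ hδpos hδ n hx hy, sum_negMulLog_cylProb_succ]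
    calc _ ≤ ∑ e, sys.p e x * (-Real.log (sys.p e x) + (ε + D * dist x y) +
          (∑ u : Fin n → E, Real.negMulLog (sys.cylProb u (sys.w e x)) + n * ε +
            D / (1 - a) * dist (sys.w e x) (sys.w e y))) := by
          refine sum_p_mul_le hx ?_
          rintro e rfl
          refine add_le_add ?_ (ih _ _ (sys.w_mapsTo e hx) _ (sys.w_mapsTo e hy))
          have h1 := (abs_le.1 (hlog e _ x hx y hy)).2
          have h2 := mul_le_mul_of_nonneg_right (hCD e) (dist_nonneg (x := x) (y := y))
          linarith
      _ = sys.localEntropy x + ((ε + D * dist x y) + n * ε) * ∑ e, sys.p e x +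
            sys.transfer (fun y => ∑ u : Fin n → E, Real.negMulLog (sys.cylProb u y)) x +
            D / (1 - a) * ∑ e, sys.p e x * dist (sys.w e x) (sys.w e y) := by
          simp only [localEntropy, transfer, Real.negMulLog, Finset.mul_sum,
            ← Finset.sum_add_distrib]
          refine Finset.sum_congr rfl fun e _ => ?_
          simp only [mul_add, Finset.mul_sum]
          ring
      _ ≤ sys.localEntropy x + ((ε + D * dist x y) + n * ε) * 1 +
            sys.transfer (fun y => ∑ u : Fin n → E, Real.negMulLog (sys.cylProb u y)) x +
            D / (1 - a) * (a * dist x y) := by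
          rw [sys.p_sum_one]
          gcongr
          exact hcontr v x hx y hy
      _ = _ := by
          push_cast
          field_simp
          ring

end MarkovSystem

/-- The word of length `n` read off from position `m`. -/
def window {E : Type*} (m : ℤ) (n : ℕ) (σ : ℤ → E) : Fin n → E := fun j => σ (m + (j : ℕ))

/-- The window of length `2 n + 1` around the origin. -/
def centralWindow {E : Type*} (n : ℕ) (σ : ℤ → E) : Fin (2 * n + 1) → E :=
  window (-(n : ℤ)) (2 * n + 1) σ

theorem shift_iterate_apply {E : Type*} (n : ℕ) (σ : ℤ → E) (k : ℤ) :
    shift^[n] σ k = σ (k + n) := by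
  induction n generalizing σ with
  | zero => simp
  | succ n ih =>
    rw [Function.iterate_succ_apply, ih, shift]
    congr 1
    push_cast
    ring

theorem centralWindow_shift_iterate {E : Type*} {n L j : ℕ} (hj : j + (2 * n + 1) ≤ L)
    (σ : ℤ → E) :
    centralWindow n (shift^[j] σ) =
      fun i : Fin (2 * n + 1) => window (-(n : ℤ)) L σ ⟨j + i, by omega⟩ := by
  funext i
  simp only [centralWindow, window, shift_iterate_apply]
  congr 1
  push_cast
  ring

theorem measurable_shift {E : Type*} [MeasurableSpace E] :
    Measurable (shift : (ℤ → E) → (ℤ → E)) :=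
  measurable_pi_lambda _ fun k => measurable_pi_apply (k + 1)

theorem measurable_window {E : Type*} [MeasurableSpace E] (m : ℤ) (n : ℕ) :
    Measurable (window m n : (ℤ → E) → (Fin n → E)) :=
  measurable_pi_lambda _ fun j => measurable_pi_apply (m + (j : ℕ))

theorem measurable_centralWindow {E : Type*} [MeasurableSpace E] (n : ℕ) :
    Measurable (centralWindow n : (ℤ → E) → _) :=
  measurable_window _ _

/-- The sets determined by a central window. -/
def centralSets (E : Type*) : Set (Set (ℤ → E)) :=
  {B | ∃ (n : ℕ) (T : Set (Fin (2 * n + 1) → E)), B = centralWindow n ⁻¹' T}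

theorem exists_eq_centralWindow_preimage {E : Type*} {n n' : ℕ} (h : n ≤ n')
    (T : Set (Fin (2 * n + 1) → E)) :
    ∃ T' : Set (Fin (2 * n' + 1) → E),
      (centralWindow n ⁻¹' T : Set (ℤ → E)) = centralWindow n' ⁻¹' T' := by
  refine ⟨(fun u (i : Fin (2 * n + 1)) => u ⟨(n' - n) + i, by omega⟩) ⁻¹' T, ?_⟩
  rw [← Set.preimage_comp]
  congr 1
  funext σ i
  simp only [centralWindow, window, Function.comp]
  congr 1
  push_cast [h]
  ring

theorem isSetAlgebra_centralSets (E : Type*) : IsSetAlgebra (centralSets E) where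
  empty_mem := ⟨0, ∅, by simp⟩
  compl_mem := by
    rintro _ ⟨n, T, rfl⟩
    exact ⟨n, Tᶜ, rfl⟩
  union_mem := by
    rintro _ _ ⟨n, T, rfl⟩ ⟨m, T', rfl⟩
    obtain ⟨S, hS⟩ := exists_eq_centralWindow_preimage (le_max_left n m) T
    obtain ⟨S', hS'⟩ := exists_eq_centralWindow_preimage (le_max_right n m) T'
    exact ⟨max n m, S ∪ S', by rw [hS, hS']; rfl⟩

theorem generateFrom_centralSets (E : Type*) [Finite E] [MeasurableSpace E]
    [MeasurableSingletonClass E] :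
    (MeasurableSpace.pi : MeasurableSpace (ℤ → E)) =
      MeasurableSpace.generateFrom (centralSets E) := by
  apply le_antisymm
  · refine iSup_le fun k => ?_
    rintro _ ⟨A, -, rfl⟩
    refine MeasurableSpace.measurableSet_generateFrom
      ⟨k.natAbs, {u | u ⟨(k + k.natAbs).toNat, by omega⟩ ∈ A}, ?_⟩
    ext σ
    simp only [Set.mem_preimage, centralWindow, window, Set.mem_ofPred_eq]
    rw [show -(k.natAbs : ℤ) + ((k + k.natAbs).toNat : ℤ) = k by omega]
  · refine MeasurableSpace.generateFrom_le ?_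
    rintro _ ⟨n, T, rfl⟩
    exact measurable_window _ _ T.toFinite.measurableSet

/-- A finite measurable partition of `E^ℤ` is approximated by one depending on a central window. -/
theorem exists_centralWindow_approx {E : Type*} [Finite E] [MeasurableSpace E]
    [MeasurableSingletonClass E] (M : Measure (ℤ → E)) [IsProbabilityMeasure M] {k : ℕ}
    (π : (ℤ → E) → Fin k) (hπ : ∀ j, MeasurableSet (π ⁻¹' {j})) {ε : ℝ} (hε : 0 < ε) :
    ∃ (n : ℕ) (φ : (Fin (2 * n + 1) → E) → Fin k),
      M.real {σ | π σ ≠ φ (centralWindow n σ)} ≤ ε := by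
  classical
  have hne : Nonempty (ℤ → E) := nonempty_of_isProbabilityMeasure M
  obtain ⟨σ₀⟩ := hne
  have hk : 0 < k := (Nat.zero_le _).trans_lt (π σ₀).isLt
  have hd := Measure.MeasureDense.of_generateFrom_isSetAlgebra_finite (μ := M)
    (isSetAlgebra_centralSets E) (generateFrom_centralSets E)
  have hεk : 0 < ε / k := by positivity
  choose B hB hBm using fun j => hd.approx (π ⁻¹' {j}) (hπ j) (measure_ne_top _ _) _ hεk
  choose m T hT using hB
  have hle (j) : m j ≤ ∑ j, m j := Finset.single_le_sum (fun _ _ => Nat.zero_le _)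
    (Finset.mem_univ j)
  choose T' hT' using fun j => exists_eq_centralWindow_preimage (hle j) (T j)
  refine ⟨∑ j, m j, fun u => if h : ∃ j, u ∈ T' j then h.choose else ⟨0, hk⟩, ?_⟩
  have hBT (j) : B j = centralWindow (∑ j, m j) ⁻¹' T' j := (hT j).trans (hT' j)
  calc _ ≤ M.real (⋃ j, symmDiff (π ⁻¹' {j}) (B j)) := by
        refine measureReal_mono fun σ hσ => ?_
        by_contra hn
        simp only [Set.mem_iUnion, not_exists, Set.mem_symmDiff, Set.mem_preimage,
          Set.mem_singleton_iff, not_or, not_and, not_not, hBT] at hn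
        have hex : ∃ j, centralWindow (∑ j, m j) σ ∈ T' j := ⟨π σ, (hn (π σ)).1 rfl⟩
        refine hσ ?_
        simp only [hex, dif_pos]
        exact (hn _).2 hex.choose_spec
    _ ≤ ∑ j, M.real (symmDiff (π ⁻¹' {j}) (B j)) := measureReal_iUnion_fintype_le _
    _ ≤ ∑ _j : Fin k, ε / k := Finset.sum_le_sum fun j _ => by
        rw [measureReal_def]
        exact ENNReal.toReal_le_of_le_ofReal hεk.le (hBm j).le
    _ = ε := by simp; field_simp

section

variable {K : Type*} [MetricSpace K] [MeasurableSpace K] {N : ℕ} {E : Type*} [Fintype E]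
  [MeasurableSpace E] {sys : MarkovSystem K N E} {μ : Measure K} {M : Measure (ℤ → E)}

theorem IsMarkovMeasure.measure_window (hM : IsMarkovMeasure sys μ M) (m : ℤ) {n : ℕ}
    (u : Fin n → E) :
    M (window m n ⁻¹' {u}) = ENNReal.ofReal (∫ x, sys.cylProb u x ∂μ) := by
  refine Eq.trans (congrArg M ?_) (hM.2 m (List.ofFn u))
  ext σ
  simp only [Set.mem_preimage, Set.mem_singleton_iff, funext_iff, window, Set.mem_ofPred_eq,
    List.get_ofFn]
  exact ⟨fun h j => h (j.cast List.length_ofFn), fun h j => h (j.cast List.length_ofFn.symm)⟩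

theorem IsMarkovMeasure.measureReal_window (hM : IsMarkovMeasure sys μ M) (m : ℤ) {n : ℕ}
    (u : Fin n → E) :
    M.real (window m n ⁻¹' {u}) = ∫ x, sys.cylProb u x ∂μ := by
  rw [measureReal_def, hM.measure_window, ENNReal.toReal_ofReal]
  exact integral_nonneg fun x => MarkovSystem.cylProb_nonneg u x

variable [MeasurableSingletonClass E]

theorem IsMarkovMeasure.integral_window (hM : IsMarkovMeasure sys μ M) [IsProbabilityMeasure μ]
    (m : ℤ) {n : ℕ} (G : (Fin n → E) → ℝ) :
    ∫ σ, G (window m n σ) ∂M = ∫ x, ∑ u, sys.cylProb u x * G u ∂μ := by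
  have := hM.1
  rw [← integral_map (φ := window m n) (measurable_window m n).aemeasurable
    (measurable_of_finite G).aestronglyMeasurable, integral_fintype .of_finite,
    integral_finsetSum _ fun u _ => (MarkovSystem.integrable_cylProb u μ).mul_const _]
  refine Finset.sum_congr rfl fun u _ => ?_
  rw [integral_mul_const, ← hM.measureReal_window m,
    map_measureReal_apply (measurable_window m n) (measurableSet_singleton u), smul_eq_mul]

theorem IsMarkovMeasure.measurePreserving_shift (hM : IsMarkovMeasure sys μ M) :
    MeasurePreserving shift M M := by
  have := hM.1
  have := Measure.isProbabilityMeasure_map (μ := M) (measurable_shift (E := E)).aemeasurable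
  refine ⟨measurable_shift, ext_of_generate_finite _ (generateFrom_centralSets E)
    (fun s hs t ht _ => (isSetAlgebra_centralSets E).inter_mem hs ht) ?_ (by simp)⟩
  rintro _ ⟨n, T, rfl⟩
  rw [Measure.map_apply measurable_shift
    (measurable_centralWindow n T.toFinite.measurableSet)]
  have hcomp : shift ⁻¹' (centralWindow n ⁻¹' T) =
      (window (-(n : ℤ) + 1) (2 * n + 1) ⁻¹' T : Set (ℤ → E)) := by
    rw [← Set.preimage_comp]
    congr 1
    funext σ i
    simp only [centralWindow, window, Function.comp, shift]
    congr 1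
    ring
  have key (m : ℤ) : M (window m (2 * n + 1) ⁻¹' T) =
      ∑ u ∈ T.toFinite.toFinset, ENNReal.ofReal (∫ x, sys.cylProb u x ∂μ) := by
    simp_rw [← hM.measure_window m]
    rw [sum_measure_preimage_singleton _ fun u _ =>
      measurable_window _ _ (measurableSet_singleton u)]
    simp
  rw [hcomp, key, ← key (-(n : ℤ))]
  rfl

end

/-- Gibbs' inequality: the entropy of `X` is at most the cross entropy of `(X, Y)` relative to a
subprobability vector. -/
theorem partEntropy_le_integral_neg_log {Ω : Type*} [MeasurableSpace Ω] (M : Measure Ω)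
    [IsProbabilityMeasure M] {α β : Type*} [Fintype α] [Fintype β] [MeasurableSpace α]
    [MeasurableSingletonClass α] [MeasurableSpace β] [MeasurableSingletonClass β]
    {X : Ω → α} {Y : Ω → β} (hX : Measurable X) (hY : Measurable Y) {Q : α → β → ℝ}
    (hQ0 : ∀ s t, 0 ≤ Q s t) (hQ1 : ∑ s, ∑ t, Q s t ≤ 1) (hpos : ∀ᵐ ω ∂M, 0 < Q (X ω) (Y ω)) :
    partEntropy M X ≤ ∫ ω, -Real.log (Q (X ω) (Y ω)) ∂M := by
  set P : α → β → ℝ := fun s t => M.real (X ⁻¹' {s} ∩ Y ⁻¹' {t}) with hP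
  have hXs (s) : MeasurableSet (X ⁻¹' {s}) := hX (measurableSet_singleton s)
  have hYt (t) : MeasurableSet (Y ⁻¹' {t}) := hY (measurableSet_singleton t)
  have hP0 (s t) : 0 ≤ P s t := measureReal_nonneg
  have hsum (s) : M.real (X ⁻¹' {s}) = ∑ t, P s t := by
    have := sum_measureReal_preimage_singleton (μ := M.restrict (X ⁻¹' {s})) Finset.univ
      (f := Y) fun t _ => hYt t
    simp only [measureReal_restrict_apply (hYt _), Finset.coe_univ, Set.preimage_univ,
      measureReal_restrict_apply_univ] at this
    rw [← this]
    simp only [hP, Set.inter_comm]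
  have hsum1 : ∑ s, ∑ t, P s t = 1 := by
    simp_rw [← hsum]
    rw [sum_measureReal_preimage_singleton _ fun s _ => hXs s]
    simp
  have hPQ (s t) (h : 0 < P s t) : 0 < Q s t := by
    by_contra hn
    refine h.ne' ?_
    refine (measureReal_eq_zero_iff).2 (measure_mono_null ?_ (ae_iff.1 hpos))
    rintro ω ⟨rfl, rfl⟩
    exact hn
  have h_int : ∫ ω, -Real.log (Q (X ω) (Y ω)) ∂M = ∑ s, ∑ t, P s t * -Real.log (Q s t) := by
    have hXY : Measurable fun ω => (X ω, Y ω) := hX.prodMk hY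
    rw [← integral_map (φ := fun ω => (X ω, Y ω)) (f := fun z => -Real.log (Q z.1 z.2))
      hXY.aemeasurable (measurable_of_finite _).aestronglyMeasurable,
      integral_fintype .of_finite, Fintype.sum_prod_type]
    refine Finset.sum_congr rfl fun s _ => Finset.sum_congr rfl fun t _ => ?_
    rw [map_measureReal_apply hXY (measurableSet_singleton _), smul_eq_mul]
    congr 2
    ext ω
    simp [Prod.ext_iff]
  calc partEntropy M X = ∑ s, ∑ t, P s t * -Real.log (∑ t', P s t') := by
        simp only [partEntropy, ← measureReal_def, hsum, Finset.sum_mul, mul_neg,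
          Finset.sum_neg_distrib]
    _ ≤ ∑ s, ∑ t, (P s t * -Real.log (Q s t) + (Q s t - P s t)) := by
        refine Finset.sum_le_sum fun s _ => Finset.sum_le_sum fun t _ => ?_
        rcases (hP0 s t).eq_or_lt with h0 | h0
        · simpa [← h0] using hQ0 s t
        · have hq := hPQ s t h0
          have h1 := Real.log_le_log h0
            (Finset.single_le_sum (fun t _ => hP0 s t) (Finset.mem_univ t))
          have h2 := Real.log_le_sub_one_of_pos (div_pos hq h0)
          rw [Real.log_div hq.ne' h0.ne'] at h2
          have h3 : P s t * (Q s t / P s t - 1) = Q s t - P s t := by field_simp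
          have h4 := mul_le_mul_of_nonneg_left h2 h0.le
          have h5 := mul_le_mul_of_nonneg_left h1 h0.le
          linarith
    _ ≤ _ := by
        rw [h_int]
        simp only [Finset.sum_add_distrib, Finset.sum_sub_distrib]
        linarith

namespace MarkovSystem

variable {K : Type*} [MetricSpace K] [MeasurableSpace K] {N : ℕ} {E : Type*} [Fintype E]
  {sys : MarkovSystem K N E}

/-- The distance of `x` to the base point of the set `K_v` containing it. -/
noncomputable def baseDist (sys : MarkovSystem K N E) (xs : Fin N → K) (x : K) : ℝ :=
  ∑ v, (sys.Ki v).indicator (fun y => dist y (xs v)) x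

theorem baseDist_of_mem (xs : Fin N → K) {x : K} {v : Fin N} (hx : x ∈ sys.Ki v) :
    sys.baseDist xs x = dist x (xs v) := by
  rw [baseDist, Finset.sum_eq_single v, Set.indicator_of_mem hx]
  · intro v' _ hv
    exact Set.indicator_of_notMem (fun h => (sys.Ki_disjoint _ _ hv).le_bot ⟨h, hx⟩) _
  · simp

theorem integrable_baseDist [BorelSpace K] {μ : Measure K} [IsFiniteMeasure μ] {xs : Fin N → K}
    (hfin : (∑ v : Fin N, ∫⁻ x in sys.Ki v, ENNReal.ofReal (dist x (xs v)) ∂μ) < ⊤)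
    (ys : Fin N → K) : Integrable (sys.baseDist ys) μ := by
  refine integrable_finsetSum _ fun v _ => (IntegrableOn.integrable_indicator ?_
    (sys.Ki_measurable v))
  have hx : IntegrableOn (fun y => dist y (xs v)) (sys.Ki v) μ := by
    refine ⟨(continuous_id.dist continuous_const).measurable.aestronglyMeasurable, ?_⟩
    rw [hasFiniteIntegral_iff_ofReal (.of_forall fun _ => dist_nonneg)]
    exact ENNReal.sum_lt_top.1 hfin v (Finset.mem_univ v)
  refine (hx.add (integrable_const (dist (xs v) (ys v)))).mono'
    (continuous_id.dist continuous_const).measurable.aestronglyMeasurable (.of_forall fun y => ?_)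
  rw [Real.norm_of_nonneg dist_nonneg]
  exact dist_triangle _ _ _

theorem comps_eq_cylMap_window (σ : ℤ → E) (m : ℕ) (x : K) :
    comps sys.w σ m x = sys.cylMap (window (-(m : ℤ)) (m + 1) σ) x := by
  induction m generalizing x with
  | zero => simp [comps, cylMap, window, List.ofFn_succ, wordMap]
  | succ m ih =>
    have h : (window (-((m + 1 : ℕ) : ℤ)) (m + 1 + 1) σ : Fin (m + 1 + 1) → E) =
        Fin.cons (σ (-((m : ℤ) + 1))) (window (-(m : ℤ)) (m + 1) σ) := by
      funext i
      refine Fin.cases ?_ (fun i => ?_) i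
      · simp only [window, Fin.cons_zero]
        congr 1
      · simp only [window, Fin.cons_succ]
        congr 1
        simp
        ring
    rw [h, cylMap_cons, ← ih]
    rfl

/-- The coding map pushes `M` to `μ`, tested on almost Lipschitz functions. -/
theorem integral_comp_codingMap [BorelSpace K] [MeasurableSpace E] [MeasurableSingletonClass E]
    {a : ℝ} (ha0 : 0 < a) (ha1 : a < 1) (hcontr : sys.ContractiveOnAvg a)
    (hopen : ∀ v, IsOpen (sys.Ki v)) {μ : Measure K} (hμ : sys.IsInvariant μ)
    {M : Measure (ℤ → E)} (hM : IsMarkovMeasure sys μ M) {F : (ℤ → E) → K}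
    (hF : IsCodingMap sys M F) {xs : Fin N → K}
    (hfin : (∑ v : Fin N, ∫⁻ x in sys.Ki v, ENNReal.ofReal (dist x (xs v)) ∂μ) < ⊤)
    {g : K → ℝ} (hg : sys.AlmostLipschitz g) {B : ℝ} (hB : ∀ x, |g x| ≤ B) :
    ∫ σ, g (F σ) ∂M = ∫ x, g x ∂μ := by
  have := hμ.1
  have := hM.1
  obtain ⟨hFm, ys, hys, hlim⟩ := hF
  have hgc := hg.continuous hopen
  have hrad := integrable_baseDist hfin ys
  let G (m : ℕ) (u : Fin (m + 1) → E) : ℝ := g (sys.cylMap u (ys (sys.edgeI (u 0))))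
  have hA : Tendsto (fun m : ℕ => ∫ σ, G m (window (-(m : ℤ)) (m + 1) σ) ∂M) atTop
      (nhds (∫ σ, g (F σ) ∂M)) := by
    refine tendsto_integral_of_dominated_convergence (fun _ => B) (fun m => ?_)
      (integrable_const B) (fun m => .of_forall fun σ => hB _) ?_
    · exact ((measurable_of_finite (G m)).comp (measurable_window _ _)).aestronglyMeasurable
    · filter_upwards [hlim] with σ hσ
      refine ((hgc.tendsto _).comp hσ).congr fun m => ?_
      simp [G, comps_eq_cylMap_window, window]
  refine eq_of_forall_dist_le fun ε hε => ?_
  obtain ⟨C, hC, hosc⟩ := hg ε hε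
  have hbound (m : ℕ) : dist (∫ σ, G m (window (-(m : ℤ)) (m + 1) σ) ∂M) (∫ x, g x ∂μ) ≤
      ε + C * a ^ (m + 1) * ∫ x, sys.baseDist ys x ∂μ := by
    have hi (c : (Fin (m + 1) → E) → K → ℝ) (hc : ∀ u, Measurable (c u))
        (hcB : ∀ u x, |c u x| ≤ B) :
        Integrable (fun x => ∑ u, sys.cylProb u x * c u x) μ :=
      .of_bound (Finset.measurable_sum _ fun u _ =>
        (measurable_cylProb u).mul (hc u)).aestronglyMeasurable B
        (.of_forall fun x => abs_sum_cylProb_mul_le fun u _ => hcB u x)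
    rw [hM.integral_window, ← integral_sum_cylProb_mul hμ hgc.measurable hB (m + 1), Real.dist_eq,
      ← integral_sub (hi (fun u _ => G m u) (fun _ => measurable_const) fun _ _ => hB _)
        (hi (fun u x => g (sys.cylMap u x)) (fun u => hgc.measurable.comp (measurable_cylMap u))
          fun _ _ => hB _)]
    calc _ ≤ ∫ x, (ε + C * a ^ (m + 1) * sys.baseDist ys x) ∂μ := by
          rw [← Real.norm_eq_abs]
          refine norm_integral_le_of_norm_le ((integrable_const ε).add (hrad.const_mul _))
            (.of_forall fun x => ?_)
          obtain ⟨v, hv⟩ := sys.Ki_cover x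
          rw [baseDist_of_mem ys hv, Real.norm_eq_abs, ← Finset.sum_sub_distrib]
          calc _ ≤ ∑ u : Fin (m + 1) → E, sys.cylProb u x *
                (ε + C * dist (sys.cylMap u x) (sys.cylMap u (ys v))) := by
                refine (Finset.abs_sum_le_sum_abs _ _).trans (Finset.sum_le_sum fun u _ => ?_)
                rw [← mul_sub, abs_mul, abs_of_nonneg (cylProb_nonneg u x)]
                rcases (cylProb_nonneg (sys := sys) u x).eq_or_lt with h0 | h0
                · simp [← h0]
                refine mul_le_mul_of_nonneg_left ?_ h0.le
                have hv0 : sys.edgeI (u 0) = v := by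
                  refine edgeI_eq_of_p_pos hv ?_
                  rw [← Fin.cons_self_tail u, cylProb_cons] at h0
                  exact pos_of_mul_pos_left h0 (cylProb_nonneg _ _)
                obtain ⟨v', h1, h2⟩ := exists_cylMap_mem hv (hys v) h0
                simp only [G, hv0]
                rw [abs_sub_comm]
                exact hosc v' _ h1 _ h2
            _ = ε + C * ∑ u : Fin (m + 1) → E, sys.cylProb u x *
                  dist (sys.cylMap u x) (sys.cylMap u (ys v)) := by
                simp only [mul_add, Finset.sum_add_distrib, ← Finset.sum_mul, sum_cylProb,
                  one_mul, Finset.mul_sum]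
                congr 1
                exact Finset.sum_congr rfl fun _ _ => by ring
            _ ≤ ε + C * (a ^ (m + 1) * dist x (ys v)) := by
                gcongr
                exact sum_cylProb_mul_dist_le ha0 hcontr (m + 1) hv (hys v)
            _ = _ := by ring
      _ = _ := by
          rw [integral_add (integrable_const ε) (hrad.const_mul _), integral_const_mul]
          simp
  refine le_of_tendsto_of_tendsto' (hA.dist tendsto_const_nhds) ?_ hbound
  have h0 : Tendsto (fun m : ℕ => a ^ (m + 1)) atTop (nhds 0) :=
    (tendsto_pow_atTop_nhds_zero_of_lt_one ha0.le ha1).comp (tendsto_add_atTop_nat 1)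
  simpa using ((h0.const_mul C).mul_const (∫ x, sys.baseDist ys x ∂μ)).const_add ε

end MarkovSystem

namespace MarkovSystem

variable {K : Type*} [MetricSpace K] [MeasurableSpace K] {N : ℕ} {E : Type*} [Fintype E]
  {sys : MarkovSystem K N E}

/-- The average of the word probabilities over the base points. -/
noncomputable def baseProb (sys : MarkovSystem K N E) (xs : Fin N → K) {n : ℕ} (u : Fin n → E) :
    ℝ :=
  (N : ℝ)⁻¹ * ∑ v, sys.cylProb u (xs v)

theorem baseProb_nonneg (xs : Fin N → K) {n : ℕ} (u : Fin n → E) : 0 ≤ sys.baseProb xs u :=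
  mul_nonneg (by positivity) (Finset.sum_nonneg fun v _ => cylProb_nonneg u (xs v))

theorem sum_baseProb_le (xs : Fin N → K) (n : ℕ) :
    ∑ u : Fin n → E, sys.baseProb xs u ≤ 1 := by
  simp only [baseProb, ← Finset.mul_sum]
  rw [Finset.sum_comm]
  simpa [sum_cylProb] using inv_mul_le_one

theorem le_baseProb (xs : Fin N → K) {n : ℕ} (u : Fin n → E) (v : Fin N) :
    (N : ℝ)⁻¹ * sys.cylProb u (xs v) ≤ sys.baseProb xs u := by
  unfold baseProb
  gcongr
  exact Finset.single_le_sum (fun v _ => cylProb_nonneg u (xs v)) (Finset.mem_univ v)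

theorem baseProb_pos {δ : ℝ} (hδpos : 0 < δ)
    (hδ : ∀ e, ∀ x ∈ sys.Ki (sys.edgeI e), δ ≤ sys.p e x) {xs : Fin N → K}
    (hxs : ∀ v, xs v ∈ sys.Ki v) {n : ℕ} {u : Fin n → E} {x : K} (h : 0 < sys.cylProb u x) :
    0 < sys.baseProb xs u := by
  obtain ⟨v, hv⟩ := sys.Ki_cover x
  have hN : 0 < N := (Nat.zero_le _).trans_lt v.isLt
  exact (mul_pos (by positivity) (cylProb_pos_of_mem hδpos hδ hv (hxs v) h)).trans_le
    (le_baseProb xs u v)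

theorem sum_cylProb_mul_neg_log_baseProb_le {δ : ℝ} (hδpos : 0 < δ)
    (hδ : ∀ e, ∀ x ∈ sys.Ki (sys.edgeI e), δ ≤ sys.p e x) {xs : Fin N → K}
    (hxs : ∀ v, xs v ∈ sys.Ki v) (n : ℕ) {x : K} {v : Fin N} (hx : x ∈ sys.Ki v) :
    ∑ u : Fin n → E, sys.cylProb u x * -Real.log (sys.baseProb xs u) ≤
      Real.log N + sys.crossEntropy n x (xs v) := by
  have hN : 0 < N := (Nat.zero_le _).trans_lt v.isLt
  calc _ ≤ ∑ u : Fin n → E, sys.cylProb u x *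
        (Real.log N + -Real.log (sys.cylProb u (xs v))) := by
        refine Finset.sum_le_sum fun u _ => ?_
        rcases (cylProb_nonneg (sys := sys) u x).eq_or_lt with h0 | h0
        · simp [← h0]
        refine mul_le_mul_of_nonneg_left ?_ h0.le
        have h1 := cylProb_pos_of_mem hδpos hδ hx (hxs v) h0
        have hN' : (0 : ℝ) < (N : ℝ)⁻¹ := by positivity
        have h2 := Real.log_le_log (mul_pos hN' h1) (le_baseProb xs u v)
        rw [Real.log_mul hN'.ne' h1.ne', Real.log_inv] at h2
        linarith
    _ = _ := by
        simp only [mul_add, Finset.sum_add_distrib, ← Finset.sum_mul, sum_cylProb, one_mul,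
          crossEntropy]

/-- The integral in the entropy formula in terms of the local entropy. -/
theorem neg_sum_setIntegral_eq {ν : Measure K} [IsProbabilityMeasure ν] :
    -∑ e : E, ∫ x in sys.Ki (sys.edgeI e), sys.p e x * Real.log (sys.p e x) ∂ν =
      ∫ x, sys.localEntropy x ∂ν := by
  have hi (e : E) : Integrable (fun x => Real.negMulLog (sys.p e x)) ν :=
    .of_bound (Real.continuous_negMulLog.measurable.comp
      (sys.p_measurable e)).aestronglyMeasurable 1
      (.of_forall fun x => abs_negMulLog_le_one (sys.p_nonneg e x) (p_le_one e x))
  simp only [localEntropy]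
  rw [integral_finsetSum _ fun e _ => hi e, ← Finset.sum_neg_distrib]
  refine Finset.sum_congr rfl fun e _ => ?_
  rw [setIntegral_eq_integral_of_forall_compl_eq_zero, ← integral_neg]
  · simp only [Real.negMulLog, neg_mul]
  · intro x hx
    simp [sys.p_eq_zero e x hx]

variable [MeasurableSpace E] {μ : Measure K} {M : Measure (ℤ → E)}

theorem ae_baseProb_window_pos {δ : ℝ} (hδpos : 0 < δ)
    (hδ : ∀ e, ∀ x ∈ sys.Ki (sys.edgeI e), δ ≤ sys.p e x) {xs : Fin N → K}
    (hxs : ∀ v, xs v ∈ sys.Ki v) (hM : IsMarkovMeasure sys μ M) (m : ℤ) (n : ℕ) :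
    ∀ᵐ σ ∂M, 0 < sys.baseProb xs (window m n σ) := by
  have hnull (u : Fin n → E) : ∀ᵐ σ ∂M, window m n σ = u → 0 < sys.baseProb xs u := by
    by_cases hu : 0 < sys.baseProb xs u
    · exact .of_forall fun _ _ => hu
    have h0 (x : K) : sys.cylProb u x = 0 :=
      le_antisymm (not_lt.1 fun h => hu (baseProb_pos hδpos hδ hxs h)) (cylProb_nonneg u x)
    have hz : M (window m n ⁻¹' {u}) = 0 := by simp [hM.measure_window, h0]
    filter_upwards [measure_eq_zero_iff_ae_notMem.1 hz] with σ hσ h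
    exact absurd h hσ
  filter_upwards [ae_all_iff.2 hnull] with σ hσ
  exact hσ _ rfl

variable [MeasurableSingletonClass E]

/-- Up to a sublinear error, the entropy of words of length `n` is at most `n` times the mean
local entropy. -/
theorem exists_integral_neg_log_baseProb_le [BorelSpace K] {a : ℝ} (ha1 : a < 1)
    (hcontr : sys.ContractiveOnAvg a) {δ : ℝ} (hδpos : 0 < δ)
    (hδ : ∀ e, ∀ x ∈ sys.Ki (sys.edgeI e), δ ≤ sys.p e x)
    (hdini : ∀ e, DiniContinuous fun x : sys.Ki (sys.edgeI e) => sys.p e (x : K))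
    (hμ : sys.IsInvariant μ) (hM : IsMarkovMeasure sys μ M)
    {xs : Fin N → K} (hxs : ∀ v, xs v ∈ sys.Ki v)
    (hfin : (∑ v : Fin N, ∫⁻ x in sys.Ki v, ENNReal.ofReal (dist x (xs v)) ∂μ) < ⊤)
    {ε : ℝ} (hε : 0 < ε) :
    ∃ D : ℝ, ∀ (m : ℤ) (n : ℕ), ∫ σ, -Real.log (sys.baseProb xs (window m n σ)) ∂M ≤
      n * (∫ x, sys.localEntropy x ∂μ + ε) + D := by
  have := hμ.1
  obtain ⟨C, hC⟩ := exists_crossEntropy_le hδpos hδ hdini ha1 hcontr hε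
  have hrad := integrable_baseDist hfin xs
  refine ⟨Real.log N + C * ∫ x, sys.baseDist xs x ∂μ, fun m n => ?_⟩
  have hH : Integrable (fun x => ∑ u : Fin n → E, Real.negMulLog (sys.cylProb u x)) μ :=
    integrable_finsetSum _ fun u _ => integrable_negMulLog_cylProb u μ
  rw [hM.integral_window m fun u => -Real.log (sys.baseProb xs u)]
  have hR : Integrable (fun x => (n * ε + Real.log N) + C * sys.baseDist xs x) μ :=
    (integrable_const _).add (hrad.const_mul _)
  calc _ ≤ ∫ x, (∑ u : Fin n → E, Real.negMulLog (sys.cylProb u x) +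
        ((n * ε + Real.log N) + C * sys.baseDist xs x)) ∂μ := by
        refine integral_mono
          (integrable_finsetSum _ fun u _ => (integrable_cylProb u μ).mul_const _)
          (hH.add hR) fun x => ?_
        obtain ⟨v, hv⟩ := sys.Ki_cover x
        have h1 := sum_cylProb_mul_neg_log_baseProb_le hδpos hδ hxs n hv
        have h2 := hC n v x hv _ (hxs v)
        simp only [baseDist_of_mem xs hv]
        linarith
    _ = _ := by
        rw [integral_add hH hR,
          integral_add (integrable_const _) (hrad.const_mul _), integral_const_mul,
          integral_sum_negMulLog_cylProb hμ]
        simp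
        ring

/-- The entropy of `n + 1` steps of a partition, compared with the entropy of words through a
channel `R` which predicts the partition from a central window. -/
theorem partEntropy_iterate_le {δ : ℝ} (hδpos : 0 < δ)
    (hδ : ∀ e, ∀ x ∈ sys.Ki (sys.edgeI e), δ ≤ sys.p e x)
    (hM : IsMarkovMeasure sys μ M) {xs : Fin N → K} (hxs : ∀ v, xs v ∈ sys.Ki v)
    {k : ℕ} {π : (ℤ → E) → Fin k} (hπ : Measurable π)
    {m : ℕ} {R : Fin k → (Fin (2 * m + 1) → E) → ℝ} (hR0 : ∀ c b, 0 < R c b)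
    (hR1 : ∀ b, ∑ c, R c b ≤ 1) (n : ℕ) :
    partEntropy M (fun σ => fun j : Fin (n + 1) => π (shift^[(j : ℕ)] σ)) ≤
      ∫ σ, -Real.log (sys.baseProb xs (window (-(m : ℤ)) (n + 1 + 2 * m) σ)) ∂M +
        (n + 1) * ∫ σ, -Real.log (R (π σ) (centralWindow m σ)) ∂M := by
  have := hM.1
  set L := n + 1 + 2 * m with hL
  let sub (j : Fin (n + 1)) (u : Fin L → E) : Fin (2 * m + 1) → E :=
    fun i => u ⟨j + i, by omega⟩
  let Q (s : Fin (n + 1) → Fin k) (u : Fin L → E) : ℝ :=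
    sys.baseProb xs u * ∏ j, R (s j) (sub j u)
  have hX : Measurable fun σ : ℤ → E => fun j : Fin (n + 1) => π (shift^[(j : ℕ)] σ) :=
    measurable_pi_lambda _ fun j => hπ.comp (measurable_shift.iterate _)
  have hsub (j : Fin (n + 1)) (σ : ℤ → E) :
      sub j (window (-(m : ℤ)) L σ) = centralWindow m (shift^[(j : ℕ)] σ) :=
    (centralWindow_shift_iterate (by omega) σ).symm
  have hae := ae_baseProb_window_pos hδpos hδ hxs hM (-(m : ℤ)) L
  have hprod (s : Fin (n + 1) → Fin k) (u : Fin L → E) : 0 < ∏ j, R (s j) (sub j u) :=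
    Finset.prod_pos fun j _ => hR0 _ _
  have hQ1 : ∑ s, ∑ u, Q s u ≤ 1 := by
    rw [Finset.sum_comm]
    refine le_trans (Finset.sum_le_sum fun u _ => ?_) (sum_baseProb_le (sys := sys) xs L)
    simp only [Q, ← Finset.mul_sum]
    refine mul_le_of_le_one_right (baseProb_nonneg xs u) ?_
    have := Finset.prod_univ_sum (fun _ : Fin (n + 1) => (Finset.univ : Finset (Fin k)))
      fun j c => R c (sub j u)
    rw [Fintype.piFinset_univ] at this
    rw [← this]
    exact Finset.prod_le_one (fun j _ => Finset.sum_nonneg fun c _ => (hR0 _ _).le)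
      fun j _ => hR1 _
  have hpair : Measurable fun σ : ℤ → E => (π σ, centralWindow m σ) :=
    hπ.prodMk (measurable_centralWindow m)
  have hRm : Measurable fun σ : ℤ → E => -Real.log (R (π σ) (centralWindow m σ)) :=
    (measurable_of_finite fun z : Fin k × (Fin (2 * m + 1) → E) =>
      -Real.log (R z.1 z.2)).comp hpair
  have hRi : Integrable (fun σ => -Real.log (R (π σ) (centralWindow m σ))) M :=
    (Integrable.of_finite (μ := M.map fun σ => (π σ, centralWindow m σ))
      (f := fun z : Fin k × (Fin (2 * m + 1) → E) =>
        -Real.log (R z.1 z.2))).comp_measurable hpair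
  have hWi : Integrable (fun σ => -Real.log (sys.baseProb xs (window (-(m : ℤ)) L σ))) M :=
    (Integrable.of_finite (μ := M.map (window (-(m : ℤ)) L))
      (f := fun u => -Real.log (sys.baseProb xs u))).comp_measurable (measurable_window _ _)
  have hmp (j : ℕ) : MeasurePreserving shift^[j] M M := hM.measurePreserving_shift.iterate j
  refine (partEntropy_le_integral_neg_log M hX (measurable_window (-(m : ℤ)) L) (Q := Q)
    (fun s u => mul_nonneg (baseProb_nonneg xs u) (hprod s u).le) hQ1
    (by filter_upwards [hae] with σ hσ using mul_pos hσ (hprod _ _))).trans (le_of_eq ?_)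
  calc _ = ∫ σ, (-Real.log (sys.baseProb xs (window (-(m : ℤ)) L σ)) +
        ∑ j : Fin (n + 1), -Real.log (R (π (shift^[(j : ℕ)] σ))
          (centralWindow m (shift^[(j : ℕ)] σ)))) ∂M := by
        refine integral_congr_ae ?_
        filter_upwards [hae] with σ hσ
        simp only [Q]
        rw [Real.log_mul hσ.ne' (hprod _ _).ne', Real.log_prod fun j _ => (hR0 _ _).ne', neg_add,
          Finset.sum_neg_distrib]
        simp only [hsub]
    _ = _ := by
        have h_int (j : Fin (n + 1)) : Integrable (fun σ => -Real.log (R (π (shift^[(j : ℕ)] σ))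
            (centralWindow m (shift^[(j : ℕ)] σ)))) M :=
          (hmp j).integrable_comp_of_integrable hRi
        rw [integral_add hWi (integrable_finsetSum _ fun j _ => h_int j),
          integral_finsetSum _ fun j _ => h_int j]
        congr 1
        have heq (j : Fin (n + 1)) : ∫ σ, -Real.log (R (π (shift^[(j : ℕ)] σ))
            (centralWindow m (shift^[(j : ℕ)] σ))) ∂M =
            ∫ σ, -Real.log (R (π σ) (centralWindow m σ)) ∂M := by
          nth_rw 2 [← (hmp j).map_eq]
          rw [integral_map (hmp j).aemeasurable hRm.aestronglyMeasurable]
        simp [heq]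

/-- A channel which predicts a finite partition from a central window with small loss. -/
theorem exists_channel (M : Measure (ℤ → E)) [IsProbabilityMeasure M] {k : ℕ}
    {π : (ℤ → E) → Fin k} (hπ : Measurable π) {ε : ℝ} (hε : 0 < ε) :
    ∃ (m : ℕ) (R : Fin k → (Fin (2 * m + 1) → E) → ℝ), (∀ c b, 0 < R c b) ∧
      (∀ b, ∑ c, R c b ≤ 1) ∧ ∫ σ, -Real.log (R (π σ) (centralWindow m σ)) ∂M ≤ ε := by
  obtain ⟨σ₀⟩ : Nonempty (ℤ → E) := nonempty_of_isProbabilityMeasure M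
  have hk : 0 < k := (Nat.zero_le _).trans_lt (π σ₀).isLt
  set q := Real.exp (-(ε / 2)) with hq
  have hq1 : q < 1 := by rw [hq, ← Real.exp_zero]; exact Real.exp_lt_exp.2 (by linarith)
  have hq0 : 0 < q := Real.exp_pos _
  set r := (1 - q) / k with hr
  have hr0 : 0 < r := div_pos (by linarith) (by positivity)
  set B := |Real.log r| + 1 with hBdef
  have hB : 0 < B := by positivity
  obtain ⟨m, φ, hφ⟩ := exists_centralWindow_approx M π
    (fun j => hπ (measurableSet_singleton j)) (ε := ε / 2 / B) (by positivity)
  refine ⟨m, fun c b => if c = φ b then q else r, fun c b => by dsimp only; split_ifs <;> assumption,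
    fun b => ?_, ?_⟩
  · calc _ ≤ ∑ c, ((if c = φ b then q else 0) + r) :=
          Finset.sum_le_sum fun c _ => by dsimp only; split_ifs <;> linarith
      _ = 1 := by
          rw [Finset.sum_add_distrib, Finset.sum_ite_eq' Finset.univ (φ b)]
          simp [hr]
          field_simp
          ring
  · set A := {σ : ℤ → E | π σ ≠ φ (centralWindow m σ)} with hAdef
    have hA : MeasurableSet A :=
      (measurableSet_eq_fun hπ ((measurable_of_finite φ).comp (measurable_centralWindow m))).compl
    calc _ ≤ ∫ σ, (ε / 2 + A.indicator (fun _ => B) σ) ∂M := by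
          refine integral_mono_of_nonneg (.of_forall fun σ => ?_)
            ((integrable_const _).add ((integrable_const B).indicator hA))
            (.of_forall fun σ => ?_)
          · have hr1 : r ≤ 1 := by
              rw [hr, div_le_one (by positivity)]
              have : (1 : ℝ) ≤ k := by exact_mod_cast hk
              linarith
            simp only [Pi.zero_apply, Left.nonneg_neg_iff]
            split_ifs
            · exact Real.log_nonpos hq0.le hq1.le
            · exact Real.log_nonpos hr0.le hr1
          · by_cases h : π σ = φ (centralWindow m σ)
            · simp [h, A, hq]
            · have : σ ∈ A := h
              simp only [h, if_false, Set.indicator_of_mem this]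
              have := neg_le_abs (Real.log r)
              linarith
      _ = ε / 2 + M.real A * B := by
          rw [integral_add (integrable_const _) ((integrable_const B).indicator hA),
            integral_indicator_const B hA]
          simp
      _ ≤ ε / 2 + ε / 2 / B * B := by gcongr
      _ = ε := by field_simp; ring

theorem ksEntropy_shift_le [BorelSpace K] {a : ℝ} (ha1 : a < 1)
    (hcontr : sys.ContractiveOnAvg a) {δ : ℝ} (hδpos : 0 < δ)
    (hδ : ∀ e, ∀ x ∈ sys.Ki (sys.edgeI e), δ ≤ sys.p e x)
    (hdini : ∀ e, DiniContinuous fun x : sys.Ki (sys.edgeI e) => sys.p e (x : K))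
    (hμ : sys.IsInvariant μ) (hM : IsMarkovMeasure sys μ M)
    {xs : Fin N → K} (hxs : ∀ v, xs v ∈ sys.Ki v)
    (hfin : (∑ v : Fin N, ∫⁻ x in sys.Ki v, ENNReal.ofReal (dist x (xs v)) ∂μ) < ⊤) :
    ksEntropy M shift ≤ ENNReal.ofReal (∫ x, sys.localEntropy x ∂μ) := by
  have := hM.1
  refine iSup_le fun k => iSup_le fun π => iSup_le fun hπ => ?_
  have hπm : Measurable π := measurable_to_countable' hπ
  set h := ∫ x, sys.localEntropy x ∂μ with hh
  have key (ε : ℝ) (hε : 0 < ε) : ⨅ n : ℕ, ENNReal.ofReal (((n : ℝ) + 1)⁻¹ *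
      partEntropy M (fun ω => fun j : Fin (n + 1) => π (shift^[(j : ℕ)] ω))) ≤
      ENNReal.ofReal (h + (ε + ε)) := by
    obtain ⟨m, R, hR0, hR1, hR⟩ := exists_channel M hπm hε
    obtain ⟨D, hD⟩ :=
      exists_integral_neg_log_baseProb_le ha1 hcontr hδpos hδ hdini hμ hM hxs hfin hε
    set D' := 2 * m * (h + ε) + D with hD'
    have hbound (n : ℕ) : ((n : ℝ) + 1)⁻¹ *
        partEntropy M (fun ω => fun j : Fin (n + 1) => π (shift^[(j : ℕ)] ω)) ≤
        h + (ε + ε) + D' / ((n : ℝ) + 1) := by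
      have h1 := partEntropy_iterate_le hδpos hδ hM hxs hπm hR0 hR1 n
      have h2 := hD (-(m : ℤ)) (n + 1 + 2 * m)
      have h3 : ((n : ℝ) + 1) * ∫ σ, -Real.log (R (π σ) (centralWindow m σ)) ∂M ≤
          ((n : ℝ) + 1) * ε := by gcongr
      push_cast at h2
      rw [inv_mul_le_iff₀ (by positivity), mul_add ((n : ℝ) + 1),
        mul_div_cancel₀ _ (by positivity)]
      linarith
    have hlim : Tendsto (fun n : ℕ => ENNReal.ofReal (h + (ε + ε) + D' / ((n : ℝ) + 1))) atTop
        (nhds (ENNReal.ofReal (h + (ε + ε)))) := by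
      refine ENNReal.tendsto_ofReal ?_
      simpa [div_eq_mul_one_div D'] using
        (tendsto_one_div_add_atTop_nhds_zero_nat.const_mul D').const_add (h + (ε + ε))
    exact ge_of_tendsto' hlim fun n => (iInf_le _ n).trans (ENNReal.ofReal_le_ofReal (hbound n))
  have hlim : Tendsto (fun ε : ℝ => ENNReal.ofReal (h + (ε + ε))) (nhdsWithin 0 (Set.Ioi 0))
      (nhds (ENNReal.ofReal h)) := by
    refine ENNReal.tendsto_ofReal (tendsto_nhdsWithin_of_tendsto_nhds ?_)
    have : Continuous fun ε : ℝ => h + (ε + ε) := by fun_prop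
    simpa using this.tendsto 0
  exact ge_of_tendsto hlim (eventually_mem_nhdsWithin.mono key)

theorem le_ksEntropy_shift (hμ : sys.IsInvariant μ) (hM : IsMarkovMeasure sys μ M) :
    ENNReal.ofReal (∫ x, sys.localEntropy x ∂μ) ≤ ksEntropy M shift := by
  have := hμ.1
  let f := Fintype.equivFin E
  refine le_iSup_of_le (Fintype.card E) (le_iSup_of_le (fun σ => f (σ 0))
    (le_iSup_of_le (fun j => ?_) (le_iInf fun n => ENNReal.ofReal_le_ofReal ?_)))
  · exact (measurable_of_finite f).comp (measurable_pi_apply 0) (measurableSet_singleton j)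
  have hent : partEntropy M (fun ω => fun j : Fin (n + 1) => f (shift^[(j : ℕ)] ω 0)) =
      ∑ u : Fin (n + 1) → E, Real.negMulLog (∫ x, sys.cylProb u x ∂μ) := by
    rw [partEntropy, ← (Equiv.arrowCongr (Equiv.refl (Fin (n + 1))) f).sum_comp,
      ← Finset.sum_neg_distrib]
    refine Finset.sum_congr rfl fun u _ => ?_
    have hset : ((fun ω : ℤ → E => fun j : Fin (n + 1) => f (shift^[(j : ℕ)] ω 0)) ⁻¹'
        {Equiv.arrowCongr (Equiv.refl (Fin (n + 1))) f u}) = window 0 (n + 1) ⁻¹' {u} := by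
      ext σ
      simp [funext_iff, shift_iterate_apply, window]
    rw [hset, ← measureReal_def, hM.measureReal_window, Real.negMulLog, neg_mul]
  rw [hent, ← div_eq_inv_mul, le_div_iff₀ (by positivity), mul_comm]
  have := integral_sum_negMulLog_cylProb hμ (n + 1)
  push_cast at this
  rw [← this, integral_finsetSum _ fun u _ => integrable_negMulLog_cylProb u μ]
  exact Finset.sum_le_sum fun u _ => Real.concaveOn_negMulLog.le_map_integral
    Real.continuous_negMulLog.continuousOn isClosed_Ici
    (.of_forall fun x => cylProb_nonneg u x) (integrable_cylProb u μ)
    (integrable_negMulLog_cylProb u μ)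

end MarkovSystem

/-- Entropy formula for the generalized Markov shift, pushforward form:
`h_M(S) = -∑_{e} ∫_{K_{i(e)}} p_e log p_e d(F_*M)`. -/
theorem entropy_of_generalized_markov_shift_pushforward
    {K : Type*} [MetricSpace K] [MeasurableSpace K] [BorelSpace K]
    {N : ℕ} {E : Type*} [Fintype E] [MeasurableSpace E] [MeasurableSingletonClass E]
    (sys : MarkovSystem K N E) (a : ℝ) (ha0 : 0 < a) (ha1 : a < 1)
    (hcontr : sys.ContractiveOnAvg a)
    (hrelcpt : ∀ s : Set K, Bornology.IsBounded s → IsCompact (closure s))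
    (hopen : ∀ v, IsOpen (sys.Ki v))
    (δ : ℝ) (hδpos : 0 < δ)
    (hδ : ∀ e, ∀ x ∈ sys.Ki (sys.edgeI e), δ ≤ sys.p e x)
    (hdini : ∀ e, DiniContinuous fun x : sys.Ki (sys.edgeI e) => sys.p e (x : K))
    (hsurj : Function.Surjective sys.edgeI)
    (μ : Measure K) (hμ : sys.IsInvariant μ)
    (M : Measure (ℤ → E)) (hM : IsMarkovMeasure sys μ M)
    (F : (ℤ → E) → K) (hF : IsCodingMap sys M F)
    (xs : Fin N → K) (hxs : ∀ v, xs v ∈ sys.Ki v)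
    (hfin : (∑ v : Fin N, ∫⁻ x in sys.Ki v, ENNReal.ofReal (dist x (xs v)) ∂μ) < ⊤) :
    ksEntropy M shift = ENNReal.ofReal
      (-∑ e : E, ∫ x in sys.Ki (sys.edgeI e),
        sys.p e x * Real.log (sys.p e x) ∂(Measure.map F M)) := by
  have := hμ.1
  have := hM.1
  have := Measure.isProbabilityMeasure_map (μ := M) (f := F) hF.1.aemeasurable
  rw [MarkovSystem.neg_sum_setIntegral_eq,
    integral_map hF.1.aemeasurable MarkovSystem.measurable_localEntropy.aestronglyMeasurable,
    MarkovSystem.integral_comp_codingMap ha0 ha1 hcontr hopen hμ hM hF hfin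
      (MarkovSystem.almostLipschitz_localEntropy hδpos hδ hdini) MarkovSystem.abs_localEntropy_le]
  exact le_antisymm
    (MarkovSystem.ksEntropy_shift_le ha1 hcontr hδpos hδ hdini hμ hM hxs hfin)
    (MarkovSystem.le_ksEntropy_shift hμ hM)
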